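/- Parallel rule for effective resistance: Let V be a nonempty finite type and w a conductance function on V. Let u ≠ v with w u v > 0, and let w' be the conductance function agreeing with w except that w' u v = w' v u = 0 (the edge e = {u, v} is deleted). Assume the support graph of w' is connected, and let L, L' be the weighted Laplacians of w, w'. If L f = δ_u − δ_v and L' f' = δ_u − δ_v, then f u − f v > 0, f' u − f' v > 0, and 1/(f u − f v) = w u v + 1/(f' u − f' v). In other words, writing R_e = 1/(w u v) for the resistance of the edge e and R_{Γ∖e} = f' u − f' v for the effective resistance between its endpoints after deleting e, the effective resistance satisfies r(u, v) = R_e · R_{Γ∖e} / (R_e + R_{Γ∖e}), so the canonical measure of the edge is μ(e) = 1 − w u v · r(u, v) = R_e / (R_e + R_{Γ∖e}). -/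

import Mathlib

open Finset

/-!
Deleting the edge `{u, v}` changes the Laplacian of `f` only at `u` and `v`, where the current
`w u v * (f u - f v)` through the edge is lost. So if `f` is the potential of a unit current from
`u` to `v`, then in the network without the edge it is the potential of a current of strength
`1 - w u v * (f u - f v)`. Pairing it with the potential `f'` of a unit current in that network,
the symmetry of the Laplacian gives `f u - f v = (1 - w u v * (f u - f v)) * (f' u - f' v)`. Both
voltage drops are energies of potentials that are not harmonic, hence positive, and dividing by
them gives the parallel rule.
-/

section DeleteEdge

variable {V R : Type*} [DecidableEq V] [Zero R]

/-- The conductances of the network obtained from `w` by deleting the edge `{u, v}`: both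
orientations of the edge get conductance `0`. -/
def deleteEdge (w : V → V → R) (u v a b : V) : R :=
  if (a = u ∧ b = v) ∨ (a = v ∧ b = u) then 0 else w a b

lemma deleteEdge_symm {w : V → V → R} (hsymm : ∀ x y, w x y = w y x) (u v x y : V) :
    deleteEdge w u v x y = deleteEdge w u v y x := by
  grind [deleteEdge]

lemma deleteEdge_nonneg [Preorder R] {w : V → V → R} (hnonneg : ∀ x y, 0 ≤ w x y)
    (u v x y : V) : 0 ≤ deleteEdge w u v x y := by
  unfold deleteEdge
  split_ifs
  exacts [le_rfl, hnonneg x y]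

end DeleteEdge

lemma dotProduct_single_sub_single {V R : Type*} [Fintype V] [DecidableEq V] [NonAssocRing R]
    (f : V → R) (u v : V) : f ⬝ᵥ (Pi.single u 1 - Pi.single v 1) = f u - f v := by
  rw [dotProduct_sub, dotProduct_single_one, dotProduct_single_one]

section CommRing

variable {V R : Type*} [Fintype V] [CommRing R]

/-- The Laplacian of a network with conductances `w`, acting on potentials `V → R`; the
loops `w x x` do not contribute. -/
def weightedLaplacian (w : V → V → R) : (V → R) →ₗ[R] V → R where
  toFun f x := ∑ y, w x y * (f x - f y)
  map_add' f g := by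
    ext x
    simp only [Pi.add_apply, add_sub_add_comm, mul_add, sum_add_distrib]
  map_smul' c f := by
    ext x
    simp only [Pi.smul_apply, smul_eq_mul, RingHom.id_apply, ← mul_sub, mul_left_comm, mul_sum]

lemma weightedLaplacian_apply (w : V → V → R) (f : V → R) (x : V) :
    weightedLaplacian w f x = ∑ y, w x y * (f x - f y) :=
  rfl

lemma dotProduct_weightedLaplacian (w : V → V → R) (f g : V → R) :
    g ⬝ᵥ weightedLaplacian w f = ∑ x, ∑ y, w x y * (g x * (f x - f y)) := by
  simp only [dotProduct, weightedLaplacian_apply, mul_sum, mul_left_comm]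

lemma two_mul_dotProduct_weightedLaplacian {w : V → V → R} (hsymm : ∀ x y, w x y = w y x)
    (f g : V → R) :
    2 * (g ⬝ᵥ weightedLaplacian w f) = ∑ x, ∑ y, w x y * ((g x - g y) * (f x - f y)) := by
  have swapped : g ⬝ᵥ weightedLaplacian w f = ∑ x, ∑ y, w x y * (g y * (f y - f x)) := by
    rw [dotProduct_weightedLaplacian, sum_comm]
    simp only [hsymm]
  rw [two_mul]
  nth_rw 1 [dotProduct_weightedLaplacian]
  rw [swapped]
  simp only [← sum_add_distrib]
  congr! 2
  ring

lemma dotProduct_weightedLaplacian_comm {w : V → V → R} (hsymm : ∀ x y, w x y = w y x)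
    (f g : V → R) :
    g ⬝ᵥ weightedLaplacian w f = f ⬝ᵥ weightedLaplacian w g := by
  have cross : ∑ x, ∑ y, w x y * (g x * f y) = ∑ x, ∑ y, w x y * (f x * g y) := by
    rw [sum_comm]
    congr! 2 with x _ y _
    rw [hsymm, mul_comm (g y)]
  have diagonal (x : V) : g x * f x = f x * g x := mul_comm _ _
  simp only [dotProduct_weightedLaplacian, mul_sub, sum_sub_distrib, cross, diagonal]

variable [DecidableEq V]

lemma weightedLaplacian_deleteEdge {w : V → V → R} (hsymm : ∀ x y, w x y = w y x)
    (u v : V) (f : V → R) :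
    weightedLaplacian (deleteEdge w u v) f =
      weightedLaplacian w f - (w u v * (f u - f v)) • (Pi.single u 1 - Pi.single v 1) := by
  ext x
  have edge_term (y : V) : deleteEdge w u v x y * (f x - f y) = w x y * (f x - f y) -
      ((if y = v then (if x = u then w u v * (f u - f v) else 0) else 0) -
        (if y = u then (if x = v then w u v * (f u - f v) else 0) else 0)) := by
    have := hsymm u v
    grind [deleteEdge]
  simp [weightedLaplacian_apply, edge_term, Pi.single_apply, mul_sub]

lemma sub_eq_mul_sub_of_weightedLaplacian_deleteEdge {w : V → V → R}
    (hsymm : ∀ x y, w x y = w y x) {u v : V} {f f' : V → R}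
    (hf : weightedLaplacian w f = Pi.single u 1 - Pi.single v 1)
    (hf' : weightedLaplacian (deleteEdge w u v) f' = Pi.single u 1 - Pi.single v 1) :
    f u - f v = (1 - w u v * (f u - f v)) * (f' u - f' v) := by
  have hdel : weightedLaplacian (deleteEdge w u v) f =
      (1 - w u v * (f u - f v)) • (Pi.single u 1 - Pi.single v 1) := by
    rw [weightedLaplacian_deleteEdge hsymm, hf, sub_smul, one_smul]
  calc f u - f v
      = f ⬝ᵥ weightedLaplacian (deleteEdge w u v) f' := by rw [hf', dotProduct_single_sub_single]
    _ = f' ⬝ᵥ weightedLaplacian (deleteEdge w u v) f :=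
        dotProduct_weightedLaplacian_comm (deleteEdge_symm hsymm u v) f' f
    _ = (1 - w u v * (f u - f v)) * (f' u - f' v) := by
        rw [hdel, dotProduct_smul, dotProduct_single_sub_single, smul_eq_mul]

end CommRing

section OrderedRing

variable {V R : Type*} [Fintype V] [CommRing R] [LinearOrder R] [IsStrictOrderedRing R]
  {w : V → V → R}

lemma dotProduct_weightedLaplacian_self_nonneg (hsymm : ∀ x y, w x y = w y x)
    (hnonneg : ∀ x y, 0 ≤ w x y) (f : V → R) : 0 ≤ f ⬝ᵥ weightedLaplacian w f := by
  refine nonneg_of_mul_nonneg_right (a := 2) ?_ two_pos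
  rw [two_mul_dotProduct_weightedLaplacian hsymm]
  exact sum_nonneg fun x _ ↦ sum_nonneg fun y _ ↦ mul_nonneg (hnonneg x y) (mul_self_nonneg _)

lemma dotProduct_weightedLaplacian_self_eq_zero_iff (hsymm : ∀ x y, w x y = w y x)
    (hnonneg : ∀ x y, 0 ≤ w x y) {f : V → R} :
    f ⬝ᵥ weightedLaplacian w f = 0 ↔ weightedLaplacian w f = 0 := by
  refine ⟨fun hzero ↦ ?_, fun hzero ↦ by rw [hzero, dotProduct_zero]⟩
  have term_nonneg (x y : V) : 0 ≤ w x y * ((f x - f y) * (f x - f y)) :=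
    mul_nonneg (hnonneg x y) (mul_self_nonneg _)
  have energy_zero : ∑ x, ∑ y, w x y * ((f x - f y) * (f x - f y)) = 0 := by
    rw [← two_mul_dotProduct_weightedLaplacian hsymm, hzero, mul_zero]
  have term_zero (x y : V) : w x y * ((f x - f y) * (f x - f y)) = 0 := by
    have row_zero := (sum_eq_zero_iff_of_nonneg fun x _ ↦
      sum_nonneg fun y _ ↦ term_nonneg x y).mp energy_zero x (mem_univ x)
    exact (sum_eq_zero_iff_of_nonneg fun y _ ↦ term_nonneg x y).mp row_zero y (mem_univ y)
  ext x
  rw [weightedLaplacian_apply, Pi.zero_apply]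
  refine sum_eq_zero fun y _ ↦ ?_
  simpa only [mul_eq_zero, or_self] using term_zero x y

lemma sub_pos_of_weightedLaplacian_eq [DecidableEq V] (hsymm : ∀ x y, w x y = w y x)
    (hnonneg : ∀ x y, 0 ≤ w x y) {u v : V} (huv : u ≠ v) {f : V → R}
    (hf : weightedLaplacian w f = Pi.single u 1 - Pi.single v 1) : 0 < f u - f v := by
  have hne : weightedLaplacian w f ≠ 0 := fun hzero ↦ by
    simpa [hf, huv] using congrFun hzero u
  rw [← dotProduct_single_sub_single, ← hf]
  exact (dotProduct_weightedLaplacian_self_nonneg hsymm hnonneg f).lt_of_ne'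
    (mt (dotProduct_weightedLaplacian_self_eq_zero_iff hsymm hnonneg).mp hne)

end OrderedRing

theorem stmt_7_general {V K : Type*} [Fintype V] [DecidableEq V]
    [Field K] [LinearOrder K] [IsStrictOrderedRing K] {w : V → V → K}
    (hsymm : ∀ x y, w x y = w y x) (hnonneg : ∀ x y, 0 ≤ w x y)
    {u v : V} (huv : u ≠ v) {f f' : V → K}
    (hf : weightedLaplacian w f = Pi.single u 1 - Pi.single v 1)
    (hf' : weightedLaplacian (deleteEdge w u v) f' = Pi.single u 1 - Pi.single v 1) :
    0 < f u - f v ∧ 0 < f' u - f' v ∧ 1 / (f u - f v) = w u v + 1 / (f' u - f' v) := by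
  have hd : 0 < f u - f v := sub_pos_of_weightedLaplacian_eq hsymm hnonneg huv hf
  have hd' : 0 < f' u - f' v := sub_pos_of_weightedLaplacian_eq
    (deleteEdge_symm hsymm u v) (deleteEdge_nonneg hnonneg u v) huv hf'
  have hdrop := sub_eq_mul_sub_of_weightedLaplacian_deleteEdge hsymm hf hf'
  refine ⟨hd, hd', ?_⟩
  field_simp
  linear_combination -hdrop

/-- Parallel rule for effective resistance: deleting an edge `e = {u,v}` of conductance
`w u v` (resistance `R_e = 1/(w u v)`), the effective resistances satisfy
`1/r(u,v) = w u v + 1/R_{Γ∖e}`, i.e. `r(u,v) = R_e · R_{Γ∖e}/(R_e + R_{Γ∖e})`. -/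
theorem stmt_7 {V : Type*} [Fintype V] [Nonempty V] [DecidableEq V]
    (w : V → V → ℝ)
    (hsymm : ∀ x y, w x y = w y x)
    (hnonneg : ∀ x y, 0 ≤ w x y)
    (hdiag : ∀ x, w x x = 0)
    (u v : V) (huv : u ≠ v) (hwuv : 0 < w u v)
    (w' : V → V → ℝ)
    (hw' : ∀ a b, w' a b = if (a = u ∧ b = v) ∨ (a = v ∧ b = u) then 0 else w a b)
    (L L' : (V → ℝ) → (V → ℝ))
    (hL : ∀ f x, L f x = ∑ y', w x y' * (f x - f y'))
    (hL' : ∀ f x, L' f x = ∑ y', w' x y' * (f x - f y'))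
    (G' : SimpleGraph V)
    (hG' : ∀ x y, G'.Adj x y ↔ x ≠ y ∧ 0 < w' x y)
    (hconn' : G'.Connected)
    (f f' : V → ℝ)
    (hf : L f = (fun t => (if t = u then (1 : ℝ) else 0) - (if t = v then (1 : ℝ) else 0)))
    (hf' : L' f' = (fun t => (if t = u then (1 : ℝ) else 0) - (if t = v then (1 : ℝ) else 0))) :
    0 < f u - f v ∧ 0 < f' u - f' v ∧
      1 / (f u - f v) = w u v + 1 / (f' u - f' v) := by
  obtain rfl : w' = deleteEdge w u v := funext₂ hw'
  refine stmt_7_general hsymm hnonneg huv ?_ ?_ <;> ext x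
  · simpa [weightedLaplacian_apply, hL, Pi.single_apply] using congrFun hf x
  · simpa [weightedLaplacian_apply, hL', Pi.single_apply] using congrFun hf' x
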